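/- arXiv:2405.09254 — 3 statements merged into one kernel-verified Lean document; each statement's English description precedes it below -/
import Mathlib

section
/- For every integer 0 ≤ i ≤ n, the number of matrices M ∈ Alt_n(F_q) with rank(M) = i equals [n choose i]_q · Σ_{s=0}^{i} (−1)^{i−s} q^{C(s,2)+C(i−s,2)} [i choose s]_q, where [a choose b]_q denotes the Gaussian (q-)binomial coefficient and C(m,2) = m(m−1)/2. -/
open Matrix

/-- The Gaussian (q-)binomial coefficient `[a choose b]_q = ∏_{j=0}^{b-1} (q^{a-j} - 1)/(q^{b-j} - 1)`,
as a rational number. -/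
def gaussBinom (q : ℚ) (a b : ℕ) : ℚ :=
  ∏ j ∈ Finset.range b, (q ^ (a - j) - 1) / (q ^ (b - j) - 1)

lemma gb_zero (q : ℚ) (a : ℕ) : gaussBinom q a 0 = 1 := by simp [gaussBinom]

lemma gb_gt (q : ℚ) {a b : ℕ} (h : a < b) : gaussBinom q a b = 0 := by
  unfold gaussBinom
  exact Finset.prod_eq_zero (Finset.mem_range.2 h) (by simp)

lemma pow_sub_ne {q : ℚ} (hq : 1 < q) (m : ℕ) : q ^ (m+1) - 1 ≠ 0 := by
  have := one_lt_pow₀ hq (Nat.succ_ne_zero m)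
  exact (sub_pos.2 this).ne'

/-- absorption -/
lemma gb_succ_succ (q : ℚ) (a b : ℕ) :
    gaussBinom q (a+1) (b+1) = (q^(a+1)-1)/(q^(b+1)-1) * gaussBinom q a b := by
  unfold gaussBinom
  rw [Finset.prod_range_succ']
  simp [mul_comm]

lemma gb_absorb {q : ℚ} (hq : 1 < q) (a b : ℕ) :
    (q^(b+1)-1) * gaussBinom q (a+1) (b+1) = (q^(a+1)-1) * gaussBinom q a b := by
  rw [gb_succ_succ]
  have := pow_sub_ne hq b
  field_simp

lemma gb_num (q : ℚ) (a b : ℕ) :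
    gaussBinom q a b = (∏ j ∈ Finset.range b, (q ^ (a - j) - 1)) / 
      (∏ j ∈ Finset.range b, (q ^ (j+1) - 1)) := by
  unfold gaussBinom
  rw [Finset.prod_div_distrib]
  congr 1
  rw [← Finset.prod_range_reflect]
  apply Finset.prod_congr rfl
  intro j hj
  have := Finset.mem_range.1 hj
  congr 2
  omega

lemma gb_step {q : ℚ} (hq : 1 < q) (a b : ℕ) :
    (q^(b+1)-1) * gaussBinom q a (b+1) = (q^(a-b)-1) * gaussBinom q a b := by
  rw [gb_num, gb_num, Finset.prod_range_succ, Finset.prod_range_succ]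
  have := pow_sub_ne hq b
  have h2 : ∏ j ∈ Finset.range b, (q ^ (j+1) - 1) ≠ 0 :=
    Finset.prod_ne_zero_iff.2 fun j _ => pow_sub_ne hq j
  field_simp

/-- q^b version valid everywhere -/
lemma gb_step' {q : ℚ} (hq : 1 < q) (a b : ℕ) :
    q^b * (q^(b+1)-1) * gaussBinom q a (b+1) = (q^a-q^b) * gaussBinom q a b := by
  rcases le_or_gt b a with h | h
  · obtain ⟨c, rfl⟩ := Nat.exists_eq_add_of_le h
    have := gb_step hq (b+c) b
    rw [Nat.add_sub_cancel_left] at this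
    rw [mul_assoc, this, pow_add]; ring
  · rw [gb_gt q h, gb_gt q (by omega : a < b+1)]; simp

lemma gb_pascal {q : ℚ} (hq : 1 < q) (a b : ℕ) :
    gaussBinom q (a+1) (b+1) = gaussBinom q a b + q^(b+1) * gaussBinom q a (b+1) := by
  have h1 := gb_absorb hq a b
  have h2 := gb_step' hq a b
  have h3 := pow_sub_ne hq b
  apply mul_left_cancel₀ h3
  rw [h1]
  have e : q^(b+1) = q * q^b := by ring
  linear_combination (-q) * h2

lemma gb_pascal' {q : ℚ} (hq : 1 < q) (a b : ℕ) :
    q^b * gaussBinom q (a+1) (b+1) = q^a * gaussBinom q a b + q^b * gaussBinom q a (b+1) := by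
  have h1 := gb_absorb hq a b
  have h2 := gb_step' hq a b
  have h3 := pow_sub_ne hq b
  apply mul_left_cancel₀ h3
  linear_combination q^b * h1 - h2

def uu (q : ℚ) (n s : ℕ) : ℚ := q ^ (Nat.choose s 2 + Nat.choose (n - s) 2) * gaussBinom q n s
def SS (q : ℚ) (n : ℕ) : ℚ := ∑ s ∈ Finset.range (n+1), (-1:ℚ)^(n-s) * uu q n s

lemma ch2 (s : ℕ) : Nat.choose (s+1) 2 = Nat.choose s 2 + s := by
  rw [Nat.choose_succ_succ' s 1]; simp [add_comm]

lemma uu_rec {q : ℚ} (hq : 1 < q) (n s : ℕ) (hs : s ≤ n):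
    uu q (n+1) (s+1) = q^n * uu q n s + q^(n-(s+1)) * uu q n (s+1) := by
  unfold uu
  obtain ⟨c, rfl⟩ := Nat.exists_eq_add_of_le hs
  have hp := gb_pascal' hq (s+c) s
  rw [show s + c + 1 - (s+1) = c by omega, show s + c - s = c by omega, 
    show s + c - (s+1) = c - 1 by omega, ch2]
  cases c with
  | zero => 
    rw [gb_gt q (by omega : s + 0 < s + 1)] at *
    simp only [pow_add, show Nat.choose 0 2 = 0 from rfl] at *
    linear_combination q^(s.choose 2) * hp
  | succ d =>
    simp only [Nat.add_sub_cancel, ch2]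
    simp only [pow_add] at *
    linear_combination q^(s.choose 2) *q^(d.choose 2) * q^d * hp

lemma uu_abs {q : ℚ} (hq : 1 < q) (n s : ℕ) (hs : s ≤ n) :
    (q^(n+1) - q^(n-s)) * uu q (n+1) (s+1) = q^n * (q^(n+1)-1) * uu q n s := by
  unfold uu
  obtain ⟨c, rfl⟩ := Nat.exists_eq_add_of_le hs
  have hp := gb_absorb hq (s+c) s
  rw [show s + c + 1 - (s+1) = c by omega, show s + c - s = c by omega, ch2]
  simp only [pow_add] at *
  linear_combination q^(s.choose 2) *q^(c.choose 2) * q^c * q^s * hp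

lemma uu_zero_rec (q : ℚ) (n : ℕ) : uu q (n+1) 0 = q^n * uu q n 0 := by
  simp [uu, gb_zero, ch2, pow_add]; ring

lemma uu_gt (q : ℚ) {n s : ℕ} (h : n < s) : uu q n s = 0 := by simp [uu, gb_gt q h]

lemma sgn (n s : ℕ) (h : s ≤ n) : (-1:ℚ)^(n-s) = (-1)^n * (-1)^s := by
  obtain ⟨c, rfl⟩ := Nat.exists_eq_add_of_le h
  rw [Nat.add_sub_cancel_left, pow_add, mul_right_comm, ← pow_add, ← two_mul, pow_mul]; simp

lemma SS_rec1 {q : ℚ} (hq : 1 < q) (n : ℕ) :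
    SS q (n+1) = ∑ s ∈ Finset.range (n+1), (-1:ℚ)^(n-s) * ((q^n - q^(n-s)) * uu q n s) := by
  have e1 : SS q (n+1) = ∑ s ∈ Finset.range (n+1), (-1:ℚ)^(n-s) * (q^n * uu q n s)
      - ∑ s ∈ Finset.range (n+1), (-1:ℚ)^(n-s) * (q^(n-s) * uu q n s) := by
    have : ∑ s ∈ Finset.range (n+1), (-1:ℚ)^(n-s) * (q^(n-s) * uu q n s)
      = ∑ s ∈ Finset.range (n+1+1), (-1)^n * (-1:ℚ)^s * (q^(n-s) * uu q n s) := by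
      rw [Finset.sum_range_succ _ (n+1), uu_gt q (Nat.lt_succ_self n)]
      simp only [mul_zero, add_zero]
      apply Finset.sum_congr rfl
      intro s hs
      rw [sgn n s (by have := Finset.mem_range.1 hs; omega)]
    rw [this, SS, Finset.sum_range_succ', Finset.sum_range_succ' _ (n+1), uu_zero_rec,
      ← sub_sub, ← Finset.sum_sub_distrib, sub_eq_add_neg]
    congr 1
    · apply Finset.sum_congr rfl
      intro s hs
      have hs : s ≤ n := by have := Finset.mem_range.1 hs; omega
      rw [uu_rec hq n s hs, Nat.add_sub_add_right, sgn n s hs]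
      ring
    · simp [pow_succ]
  rw [e1, ← Finset.sum_sub_distrib]
  apply Finset.sum_congr rfl
  intros; ring

lemma SS_rec {q : ℚ} (hq : 1 < q) (n : ℕ) :
    SS q (n+2) = q^n * (q^(n+1)-1) * SS q n := by
  rw [SS_rec1 hq (n+1), Finset.sum_range_succ']
  simp only [Nat.add_sub_add_right, Nat.sub_zero, sub_self, zero_mul, mul_zero, add_zero]
  rw [SS, Finset.mul_sum]
  apply Finset.sum_congr rfl
  intro s hs
  rw [uu_abs hq n s (by have := Finset.mem_range.1 hs; omega)]
  ring

lemma SS_zero (q : ℚ) : SS q 0 = 1 := by simp [SS, uu, gb_zero]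
lemma SS_one {q : ℚ} (hq : 1 < q) : SS q 1 = 0 := by
  rw [SS_rec1 hq]; simp

def ff (q : ℚ) (n i : ℕ) : ℚ := gaussBinom q n i * SS q i

lemma ff_rec {q : ℚ} (hq : 1 < q) (n i : ℕ) :
    ff q (n+1) (i+2) = q^(i+2) * ff q n (i+2) + (q^n - q^i) * ff q n i := by
  unfold ff
  rw [gb_pascal hq n (i+1), SS_rec hq]
  linear_combination SS q i * gb_step' hq n i

section
variable {F : Type*} [Field F]

lemma range_addcol {m k : Type*} [Fintype k] (A : Matrix m k F) (v : m → F) :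
    LinearMap.range (fromCols A (replicateCol Unit v)).mulVecLin =
      LinearMap.range A.mulVecLin ⊔ Submodule.span F {v} := by
  rw [Matrix.range_mulVecLin, Matrix.range_mulVecLin, ← Submodule.span_union]
  congr 1
  ext x
  simp only [Set.mem_range, Sum.exists, Set.mem_union, Set.mem_singleton_iff]
  constructor
  · rintro (⟨a, rfl⟩ | ⟨a, rfl⟩)
    · exact Or.inl ⟨a, rfl⟩
    · exact Or.inr rfl
  · rintro (⟨a, rfl⟩ | rfl)
    · exact Or.inl ⟨a, rfl⟩
    · exact Or.inr ⟨(), rfl⟩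

lemma rank_addcol_mem {m k : Type*} [Fintype k] (A : Matrix m k F) (v : m → F)
    (h : v ∈ LinearMap.range A.mulVecLin) :
    (fromCols A (replicateCol Unit v)).rank = A.rank := by
  rw [Matrix.rank, range_addcol, sup_eq_left.2]
  · rfl
  · simpa using h

lemma rank_addcol_not_mem {m k : Type*} [Fintype m] [Fintype k] (A : Matrix m k F) (v : m → F)
    (h : v ∉ LinearMap.range A.mulVecLin) :
    (fromCols A (replicateCol Unit v)).rank = A.rank + 1 := by
  rw [Matrix.rank, range_addcol, Submodule.finrank_sup_span_singleton h]
  rfl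

/-- alternating -/
def IsAlt {ι : Type*} (M : Matrix ι ι F) : Prop := Mᵀ = -M ∧ ∀ j, M j j = 0

def extM {ι : Type*} (A : Matrix ι ι F) (v : ι → F) : Matrix (ι ⊕ Unit) (ι ⊕ Unit) F :=
  fromCols (fromRows A (replicateRow Unit (-v))) (replicateCol Unit (Sum.elim v 0))

lemma IsAlt.quad {ι : Type*} [Fintype ι] {A : Matrix ι ι F} (hA : IsAlt A) (y : ι → F) :
    (A *ᵥ y) ⬝ᵥ y = 0 := by
  classical
  have hs : ∀ a b, A a b = - A b a := fun a b => by
    have := congrFun (congrFun hA.1 b) a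
    simpa using this
  simp only [dotProduct, mulVec, Finset.sum_mul]
  rw [← Finset.sum_product']
  apply Finset.sum_involution (fun p _ => (p.2, p.1))
  · rintro ⟨a, b⟩ _
    simp only
    rw [hs a b]; ring
  · rintro ⟨a, b⟩ _ h1 h2
    simp only [Prod.mk.injEq] at h2
    obtain ⟨rfl, -⟩ := h2
    simp [hA.2] at h1
  · simp
  · simp

lemma rank_row {ι : Type*} [Fintype ι] (A : Matrix ι ι F) (w : ι → F) :
    (fromRows A (replicateRow Unit w)).rank = (fromCols Aᵀ (replicateCol Unit w)).rank := by
  rw [← rank_transpose, transpose_fromRows]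
  rfl

lemma neg_mem_T {ι : Type*} [Fintype ι] {A : Matrix ι ι F} (hA : IsAlt A) (v : ι → F) :
    -v ∈ LinearMap.range (Aᵀ).mulVecLin ↔ v ∈ LinearMap.range A.mulVecLin := by
  rw [hA.1]
  simp [LinearMap.mem_range, neg_mulVec]

lemma ext_mem {ι : Type*} [Fintype ι] {A : Matrix ι ι F} (hA : IsAlt A) (v : ι → F) :
    Sum.elim v (0 : Unit → F) ∈ LinearMap.range (fromRows A (replicateRow Unit (-v))).mulVecLin
      ↔ v ∈ LinearMap.range A.mulVecLin := by
  simp only [LinearMap.mem_range, mulVecLin_apply, fromRows_mulVec]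
  constructor
  · rintro ⟨y, hy⟩
    refine ⟨y, ?_⟩
    funext a
    simpa using congrFun hy (Sum.inl a)
  · rintro ⟨y, rfl⟩
    refine ⟨y, ?_⟩
    funext a
    rcases a with a | a
    · rfl
    · have h := hA.quad y
      change (-(A *ᵥ y)) ⬝ᵥ y = 0
      rw [neg_dotProduct, h, neg_zero]

lemma rank_ext_mem {ι : Type*} [Fintype ι] {A : Matrix ι ι F} (hA : IsAlt A) (v : ι → F)
    (h : v ∈ LinearMap.range A.mulVecLin) : (extM A v).rank = A.rank := by
  rw [extM, rank_addcol_mem _ _ ((ext_mem hA v).2 h), rank_row,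
    rank_addcol_mem _ _ ((neg_mem_T hA v).2 h), rank_transpose]

lemma rank_ext_not_mem {ι : Type*} [Fintype ι] {A : Matrix ι ι F} (hA : IsAlt A) (v : ι → F)
    (h : v ∉ LinearMap.range A.mulVecLin) : (extM A v).rank = A.rank + 2 := by
  rw [extM, rank_addcol_not_mem _ _ (fun h' => h ((ext_mem hA v).1 h')), rank_row,
    rank_addcol_not_mem _ _ (fun h' => h ((neg_mem_T hA v).1 h')), rank_transpose]

lemma extM_alt {ι : Type*} {A : Matrix ι ι F} (hA : IsAlt A) (v : ι → F) :
    IsAlt (extM A v) := by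
  constructor
  · ext a b
    have := hA.1
    rcases a with a | a <;> rcases b with b | b
    · exact congrFun (congrFun hA.1 a) b
    all_goals simp [extM]
  · rintro (a | a)
    · exact hA.2 a
    · rfl

def altEquiv (F : Type*) [Field F] (ι : Type*) :
    {A : Matrix ι ι F // IsAlt A} × (ι → F) ≃ {M : Matrix (ι ⊕ Unit) (ι ⊕ Unit) F // IsAlt M} where
  toFun p := ⟨extM p.1.1 p.2, extM_alt p.1.2 p.2⟩
  invFun M := (⟨M.1.toBlocks₁₁, by
    constructor
    · ext a b
      exact congrFun (congrFun M.2.1 (Sum.inl a)) (Sum.inl b)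
    · intro j; exact M.2.2 _⟩, fun a => M.1 (Sum.inl a) (Sum.inr ()))
  left_inv p := rfl
  right_inv M := by
    apply Subtype.ext
    ext a b
    rcases a with a | a <;> rcases b with b | b
    · rfl
    · rfl
    · have := congrFun (congrFun M.2.1 (Sum.inr a)) (Sum.inl b)
      simp only [transpose_apply, neg_apply] at this
      simp [extM, this]
    · exact (M.2.2 (Sum.inr ())).symm

noncomputable def NN (F : Type*) [Field F] (ι : Type*) [Fintype ι] (i : ℕ) : ℕ :=
  Nat.card {M : Matrix ι ι F // IsAlt M ∧ M.rank = i}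

lemma NN_congr {ι κ : Type*} [Fintype ι] [Fintype κ] (e : ι ≃ κ) (i : ℕ) :
    NN F ι i = NN F κ i := by
  apply Nat.card_congr
  refine (Matrix.reindex e e).subtypeEquiv fun M => ?_
  rw [rank_reindex]
  refine and_congr_left fun _ => ?_
  constructor
  · rintro ⟨h1, h2⟩
    refine ⟨?_, fun j => h2 _⟩
    ext a b
    exact congrFun (congrFun h1 _) _
  · rintro ⟨h1, h2⟩
    constructor
    · ext a b
      simpa using congrFun (congrFun h1 (e a)) (e b)
    · intro j
      simpa using h2 (e j)

variable [Fintype F]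

lemma NN_sum (ι : Type*) [Fintype ι] [Fintype {A : Matrix ι ι F // IsAlt A}] (i : ℕ) :
    NN F ι i = ∑ A : {A : Matrix ι ι F // IsAlt A}, if A.1.rank = i then 1 else 0 := by
  unfold NN
  rw [Nat.card_congr (Equiv.subtypeSubtypeEquivSubtypeInter IsAlt
    (fun M : Matrix ι ι F => M.rank = i)).symm, Nat.card_eq_fintype_card, Fintype.card_subtype,
    Finset.card_filter]

open Classical in
lemma card_range {ι : Type*} [Fintype ι] (A : Matrix ι ι F) :
    ∑ v : ι → F, (if v ∈ LinearMap.range A.mulVecLin then (1:ℚ) else 0) = 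
      (Fintype.card F : ℚ) ^ A.rank := by
  rw [Finset.sum_boole, ← Fintype.card_subtype]
  have := Module.card_eq_pow_finrank (K := F) (V := LinearMap.range A.mulVecLin)
  rw [Matrix.rank]
  exact_mod_cast this

open Classical in
lemma NN_rec (ι : Type*) [Fintype ι] (i : ℕ) :
    (NN F (ι ⊕ Unit) i : ℚ) = (Fintype.card F : ℚ)^i * NN F ι i +
      ∑ A : {A : Matrix ι ι F // IsAlt A}, 
        if A.1.rank + 2 = i then ((Fintype.card F : ℚ)^(Fintype.card ι) - (Fintype.card F : ℚ)^A.1.rank) else 0 := by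
  have key : ∀ A : {A : Matrix ι ι F // IsAlt A}, 
      ∑ v : ι → F, (if (extM A.1 v).rank = i then (1:ℚ) else 0) = 
      (Fintype.card F : ℚ)^i * (if A.1.rank = i then 1 else 0) + 
        if A.1.rank + 2 = i then ((Fintype.card F : ℚ)^(Fintype.card ι) - (Fintype.card F : ℚ)^A.1.rank) else 0 := by
    intro A
    have h : ∀ v : ι → F, (if (extM A.1 v).rank = i then (1:ℚ) else 0) = 
       (if v ∈ LinearMap.range A.1.mulVecLin then (1:ℚ) else 0) * (if A.1.rank = i then 1 else 0) +
       (1 - (if v ∈ LinearMap.range A.1.mulVecLin then (1:ℚ) else 0)) * 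
          (if A.1.rank + 2 = i then 1 else 0) := by
      intro v
      by_cases hv : v ∈ LinearMap.range A.1.mulVecLin
      · rw [rank_ext_mem A.2 v hv, if_pos hv]; ring
      · rw [rank_ext_not_mem A.2 v hv, if_neg hv]; ring
    rw [Finset.sum_congr rfl fun v _ => h v, Finset.sum_add_distrib, ← Finset.sum_mul,
      ← Finset.sum_mul, Finset.sum_sub_distrib, card_range]
    have h1 : ∑ v : ι → F, (1:ℚ) = (Fintype.card F : ℚ)^(Fintype.card ι) := by simp
    rw [h1]
    congr 1
    · split_ifs with h
      · rw [h]
      · simp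
    · simp
  rw [NN_sum, NN_sum]
  push_cast
  rw [← Equiv.sum_comp (altEquiv F ι), Fintype.sum_prod_type]
  rw [Finset.mul_sum, ← Finset.sum_add_distrib]
  exact Finset.sum_congr rfl fun A _ => key A

lemma NN_rec_small (ι : Type*) [Fintype ι] (i : ℕ) (hi : i < 2) :
    (NN F (ι ⊕ Unit) i : ℚ) = (Fintype.card F : ℚ)^i * NN F ι i := by
  classical
  rw [NN_rec, Finset.sum_eq_zero, add_zero]
  intro A _
  rw [if_neg (by omega)]

lemma NN_rec_succ (ι : Type*) [Fintype ι] (i : ℕ) :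
    (NN F (ι ⊕ Unit) (i+2) : ℚ) = (Fintype.card F : ℚ)^(i+2) * NN F ι (i+2) +
      ((Fintype.card F : ℚ)^(Fintype.card ι) - (Fintype.card F : ℚ)^i) * NN F ι i := by
  classical
  rw [NN_rec, NN_sum ι i]
  push_cast
  rw [Finset.mul_sum]
  congr 1
  apply Finset.sum_congr rfl
  intro A _
  by_cases h : A.1.rank = i
  · simp [h]
  · simp [h]

lemma NN_empty (i : ℕ) : (NN F (Fin 0) i : ℚ) = if i = 0 then 1 else 0 := by
  classical
  rw [NN_sum]
  have hr : ∀ A : Matrix (Fin 0) (Fin 0) F, A.rank = 0 := fun A => by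
    have := A.rank_le_width; omega
  have : Unique {A : Matrix (Fin 0) (Fin 0) F // IsAlt A} :=
    { default := ⟨0, by constructor <;> simp⟩
      uniq := fun A => Subtype.ext (Subsingleton.elim _ _) }
  simp [hr, eq_comm]

lemma NN_eq (n i : ℕ) : (NN F (Fin n) i : ℚ) = ff (Fintype.card F) n i := by
  have hq : (1:ℚ) < Fintype.card F := by exact_mod_cast Fintype.one_lt_card
  induction n generalizing i with
  | zero =>
    rw [NN_empty]
    rcases i with _ | i
    · simp [ff, gb_zero, SS_zero]
    · simp [ff, gb_gt _ (Nat.succ_pos i)]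
  | succ n ih =>
    rw [← NN_congr (Fintype.equivFinOfCardEq (by simp) : Fin n ⊕ Unit ≃ Fin (n+1))]
    rcases i with _ | _ | i
    · rw [NN_rec_small _ _ (by omega), ih]; simp [ff, gb_zero]
    · rw [NN_rec_small _ _ (by omega), ih]; simp [ff, SS_one hq]
    · rw [NN_rec_succ, ih, ih, ff_rec hq, Fintype.card_fin]
end

/-- The number of alternating `n × n` matrices over `F_q` of rank `i` equals
`[n choose i]_q · Σ_{s=0}^{i} (−1)^{i−s} q^{C(s,2)+C(i−s,2)} [i choose s]_q`. -/
theorem card_alternating_rank_eq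
    {F : Type*} [Field F] [Fintype F] {n : ℕ} (i : ℕ) (hi : i ≤ n) :
    (Nat.card {M : Matrix (Fin n) (Fin n) F //
        (Mᵀ = -M ∧ ∀ j, M j j = 0) ∧ M.rank = i} : ℚ) =
      gaussBinom (Fintype.card F) n i *
        ∑ s ∈ Finset.range (i + 1),
          (-1 : ℚ) ^ (i - s) *
            (Fintype.card F : ℚ) ^ (Nat.choose s 2 + Nat.choose (i - s) 2) *
            gaussBinom (Fintype.card F) i s := by
  have h := NN_eq (F := F) n i
  unfold ff SS uu at h
  simp only [← mul_assoc] at h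
  exact h
end

section
/- Let n be odd, and let C ⊆ Alt_n(F_q) with |C| ≥ 2 be such that any two distinct X, Y ∈ C satisfy rank(X − Y) ≥ 2d. Then, as rational numbers, d ≤ (n−1)/2 + (1 − |C| · q^{3−2n})/(|C| − 1). In particular, if d > (n−1)/2 − q^{3−2n}, then |C| ≤ (d − (n−1)/2 + 1)/(d − (n−1)/2 + q^{3−2n}). -/
open Matrix

/-- A matrix whose first two rows vanish has rank at most the number of remaining rows. -/
theorem rank_le_of_two_zero_rows {F : Type*} [Field F] {k : ℕ}
    (Z : Matrix (Fin (k + 2)) (Fin (k + 2)) F)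
    (h0 : ∀ j, Z 0 j = 0) (h1 : ∀ j, Z 1 j = 0) : Z.rank ≤ k := by
  let P : Matrix (Fin (k + 2)) (Fin k) F := fun i j => if i = j.succ.succ then 1 else 0
  have hZ : Z = P * Z.submatrix (fun j : Fin k => j.succ.succ) id := by
    ext i j
    rw [Matrix.mul_apply]
    refine Fin.cases ?_ (fun i => Fin.cases ?_ (fun i => ?_) i) i
    · rw [h0, eq_comm]
      refine Finset.sum_eq_zero fun x _ => ?_
      have : P 0 x = 0 := if_neg (Fin.succ_ne_zero _).symm
      rw [this, zero_mul]
    · have h1' : Z (Fin.succ 0) j = 0 := h1 j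
      rw [h1', eq_comm]
      refine Finset.sum_eq_zero fun x _ => ?_
      have : P (Fin.succ 0) x = 0 :=
        if_neg (fun h => (Fin.succ_ne_zero x).symm (Fin.succ_injective _ h))
      rw [this, zero_mul]
    · simp [P]
  rw [hZ]
  exact (Matrix.rank_mul_le_left _ _).trans (Matrix.rank_le_width P)

/-- Singleton-type bound. -/
theorem card_le_of_rank {F : Type*} [Field F] [Fintype F] {k : ℕ}
    (C : Set (Matrix (Fin (k + 2)) (Fin (k + 2)) F))
    (hCalt : ∀ X ∈ C, Xᵀ = -X ∧ ∀ i, X i i = 0)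
    (hdist : ∀ X ∈ C, ∀ Y ∈ C, X ≠ Y → k + 1 ≤ (X - Y).rank) :
    Nat.card C ≤ Fintype.card F ^ (2 * k + 1) := by
  let f : C → (Fin (k + 1) → F) × (Fin k → F) := fun X =>
    (fun j => X.1 0 j.succ, fun j => X.1 1 j.succ.succ)
  have hf : Function.Injective f := by
    rintro ⟨X, hX⟩ ⟨Y, hY⟩ h
    by_contra hne
    have hne' : X ≠ Y := fun e => hne (Subtype.ext e)
    have e1 : ∀ j : Fin (k + 1), X 0 j.succ = Y 0 j.succ := fun j =>
      congrFun (congrArg Prod.fst h) j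
    have e2 : ∀ j : Fin k, X 1 j.succ.succ = Y 1 j.succ.succ := fun j =>
      congrFun (congrArg Prod.snd h) j
    have sk : ∀ W ∈ C, W 1 0 = - W 0 1 := fun W hW => by
      have := congrFun (congrFun (hCalt W hW).1 0) 1
      simpa using this
    have h0 : ∀ j, (X - Y) 0 j = 0 := by
      intro j
      rw [Matrix.sub_apply, sub_eq_zero]
      refine Fin.cases ?_ (fun j => e1 j) j
      rw [(hCalt X hX).2, (hCalt Y hY).2]
    have h1 : ∀ j, (X - Y) 1 j = 0 := by
      intro j
      rw [Matrix.sub_apply, sub_eq_zero]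
      refine Fin.cases ?_ (fun j => Fin.cases ?_ (fun j => e2 j) j) j
      · rw [sk X hX, sk Y hY]
        exact congrArg _ (e1 0)
      · exact ((hCalt X hX).2 1).trans ((hCalt Y hY).2 1).symm
    have := hdist X hX Y hY hne'
    have := rank_le_of_two_zero_rows (X - Y) h0 h1
    omega
  have := Nat.card_le_card_of_injective f hf
  refine this.trans (le_of_eq ?_)
  rw [Nat.card_prod, Nat.card_fun, Nat.card_fun]
  simp only [Nat.card_eq_fintype_card, Fintype.card_fin]
  rw [← pow_add]
  congr 1
  omega

/-- Total distance bound, `n` odd: if `C ⊆ Alt_n(F_q)` has `|C| ≥ 2` and any two distinct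
codewords are at rank distance at least `2d`, then
`d ≤ (n−1)/2 + (1 − |C|·q^{3−2n})/(|C| − 1)`; in particular, if `d > (n−1)/2 − q^{3−2n}`
then `|C| ≤ (d − (n−1)/2 + 1)/(d − (n−1)/2 + q^{3−2n})`. -/
theorem total_distance_bound_odd
    {F : Type*} [Field F] [Fintype F] {n d : ℕ} (hn : Odd n)
    (C : Set (Matrix (Fin n) (Fin n) F))
    (hCalt : ∀ X ∈ C, Xᵀ = -X ∧ ∀ i, X i i = 0)
    (hcard : 2 ≤ Nat.card C)
    (hdist : ∀ X ∈ C, ∀ Y ∈ C, X ≠ Y → 2 * d ≤ (X - Y).rank) :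
    ((d : ℚ) ≤ ((n : ℚ) - 1) / 2 +
        (1 - (Nat.card C : ℚ) * (Fintype.card F : ℚ) ^ ((3 : ℤ) - 2 * (n : ℤ))) /
          ((Nat.card C : ℚ) - 1)) ∧
    (((n : ℚ) - 1) / 2 - (Fintype.card F : ℚ) ^ ((3 : ℤ) - 2 * (n : ℤ)) < (d : ℚ) →
      (Nat.card C : ℚ) ≤
        ((d : ℚ) - ((n : ℚ) - 1) / 2 + 1) /
          ((d : ℚ) - ((n : ℚ) - 1) / 2 + (Fintype.card F : ℚ) ^ ((3 : ℤ) - 2 * (n : ℤ)))) := by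
  have hpart : (d : ℚ) ≤ ((n : ℚ) - 1) / 2 +
        (1 - (Nat.card C : ℚ) * (Fintype.card F : ℚ) ^ ((3 : ℤ) - 2 * (n : ℤ))) /
          ((Nat.card C : ℚ) - 1) := by
    obtain ⟨X, hX, Y, hY, hXY⟩ : ∃ X ∈ C, ∃ Y ∈ C, X ≠ Y := by
      have : Nontrivial C := Finite.one_lt_card_iff_nontrivial.mp (by omega)
      obtain ⟨⟨X, hX⟩, ⟨Y, hY⟩, h⟩ := this
      exact ⟨X, hX, Y, hY, fun e => h (Subtype.ext e)⟩
    have hr := (hdist X hX Y hY hXY).trans (Matrix.rank_le_width (X - Y))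
    obtain ⟨m, rfl⟩ := hn
    have hm : 1 ≤ m := by
      by_contra hm
      obtain rfl : m = 0 := by omega
      apply hXY
      ext i j
      have hij : i = j := Subsingleton.elim (α := Fin 1) i j
      rw [hij, (hCalt X hX).2, (hCalt Y hY).2]
    obtain ⟨m, rfl⟩ : ∃ l, m = l + 1 := ⟨m - 1, by omega⟩
    have hq : (1 : ℚ) ≤ (Fintype.card F : ℚ) := by exact_mod_cast Fintype.card_pos
    have hN : (2 : ℚ) ≤ (Nat.card C : ℚ) := by exact_mod_cast hcard
    have hexp : (3 : ℤ) - 2 * ((2 * (m + 1) + 1 : ℕ) : ℤ) = -((2 * (2 * m + 1) + 1 : ℕ) : ℤ) := by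
      push_cast; ring
    rw [hexp, _root_.zpow_neg, _root_.zpow_natCast, ← sub_le_iff_le_add', le_div_iff₀ (by linarith)]
    have hQ : (1 : ℚ) ≤ (Fintype.card F : ℚ) ^ (2 * (2 * m + 1) + 1) := one_le_pow₀ hq
    push_cast
    by_cases hd : d = m + 1
    · have hle := card_le_of_rank (k := 2 * m + 1) C hCalt
        (fun X hX Y hY h => by have := hdist X hX Y hY h; omega)
      have hle' : (Nat.card C : ℚ) ≤ (Fintype.card F : ℚ) ^ (2 * (2 * m + 1) + 1) := by
        exact_mod_cast hle
      have h1 := mul_inv_le_one_of_le₀ hle' (by linarith)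
      subst hd
      push_cast
      linarith
    · have hd' : (d : ℚ) ≤ m := by
        have : d ≤ m := by omega
        exact_mod_cast this
      have hi := inv_le_one_of_one_le₀ hQ
      nlinarith
  refine ⟨hpart, fun hlt => ?_⟩
  have hN : (2 : ℚ) ≤ (Nat.card C : ℚ) := by exact_mod_cast hcard
  rw [← sub_le_iff_le_add', le_div_iff₀ (by linarith)] at hpart
  rw [le_div_iff₀ (by linarith)]
  linarith
end

section
/- Let C ⊆ Alt_n(F_q) be such that any two distinct X, Y ∈ C satisfy rank(X − Y) ≥ 2d, where 1 ≤ d ≤ ⌊n/2⌋. Then |C| ≤ q^{(n(n−1)/(2⌊n/2⌋)) · (⌊n/2⌋ − d + 1)} (the Singleton-like bound of Delsarte and Goethals for alternating rank-metric codes). -/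
open Matrix

namespace AltCode

section rank
variable {F : Type*} [Field F]

/-- Alternating matrices as an additive subgroup. -/
def Alt (F : Type*) [Field F] (n : ℕ) : AddSubgroup (Matrix (Fin n) (Fin n) F) where
  carrier := {A | Aᵀ = -A ∧ ∀ i, A i i = 0}
  zero_mem' := by simp
  add_mem' := by
    rintro A B ⟨hA, hA'⟩ ⟨hB, hB'⟩
    refine ⟨?_, fun i => by simp [hA', hB']⟩
    rw [transpose_add, hA, hB, neg_add]
  neg_mem' := by
    rintro A ⟨hA, hA'⟩
    exact ⟨by rw [transpose_neg, hA], fun i => by simp [hA']⟩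

lemma alt_anti {n : ℕ} (A : Alt F n) (i j : Fin n) : A.1 i j = - A.1 j i := by
  have := congrFun (congrFun A.2.1 j) i
  simpa using this

/-- Bordered matrix. -/
def brd {n : ℕ} (v : Fin n → F) (A : Matrix (Fin n) (Fin n) F) :
    Matrix (Fin (n+1)) (Fin (n+1)) F :=
  Matrix.of (Fin.cons (Fin.cons 0 v) (fun i => Fin.cons (- v i) (A i)))

@[simp] lemma brd_zz {n : ℕ} (v : Fin n → F) (A) : brd v A 0 0 = 0 := rfl
@[simp] lemma brd_zs {n : ℕ} (v : Fin n → F) (A) (i) : brd v A 0 (Fin.succ i) = v i := rfl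
@[simp] lemma brd_sz {n : ℕ} (v : Fin n → F) (A) (i) : brd v A (Fin.succ i) 0 = - v i := rfl
@[simp] lemma brd_ss {n : ℕ} (v : Fin n → F) (A) (i j) :
  brd v A (Fin.succ i) (Fin.succ j) = A i j := rfl

/-- Decomposition of alternating matrices. -/
def brdEquiv (F : Type*) [Field F] (n : ℕ) : ((Fin n → F) × Alt F n) ≃+ Alt F (n+1) where
  toFun p := ⟨brd p.1 p.2.1, by
    constructor
    · ext i j
      refine Fin.cases ?_ (fun i => ?_) i <;> refine Fin.cases ?_ (fun j => ?_) j <;> simp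
      exact alt_anti p.2 _ _
    · intro i
      refine Fin.cases ?_ (fun i => ?_) i <;> simp
      exact p.2.2.2 i⟩
  invFun A := ⟨fun i => A.1 0 i.succ, ⟨fun i j => A.1 i.succ j.succ, by
    constructor
    · ext i j
      exact alt_anti A _ _
    · intro i
      exact A.2.2 _⟩⟩
  left_inv p := by
    rcases p with ⟨v, A, hA⟩
    rfl
  right_inv A := by
    apply Subtype.ext
    ext i j
    refine Fin.cases ?_ (fun i => ?_) i <;> refine Fin.cases ?_ (fun j => ?_) j <;> simp
    · exact (A.2.2 0).symm
    · rfl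
    · exact (alt_anti A _ _).symm
    · rfl
  map_add' p r := by
    apply Subtype.ext
    ext i j
    refine Fin.cases ?_ (fun i => ?_) i <;> refine Fin.cases ?_ (fun j => ?_) j <;> simp
    ring

lemma brdEquiv_coe {n : ℕ} (v : Fin n → F) (A : Alt F n) :
    (brdEquiv F n (v, A)).1 = brd v A.1 := rfl

/-- Add a column. -/
def addCol {m : Type*} {n : ℕ} (c : m → F) (M : Matrix m (Fin n) F) : Matrix m (Fin (n+1)) F :=
  Matrix.of (fun i => Fin.cons (c i) (M i))

lemma rank_addCol {m : Type*} [Fintype m] {n : ℕ} (c : m → F) (M : Matrix m (Fin n) F)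
    [Decidable (∃ x, M *ᵥ x = c)] :
    (addCol c M).rank = M.rank + if (∃ x, M *ᵥ x = c) then 0 else 1 := by
  have hr : Submodule.span F (Set.range (addCol c M).col)
      = Submodule.span F (Set.range M.col) ⊔ Submodule.span F {c} := by
    rw [← Submodule.span_union]
    congr 1
    ext x
    simp only [Set.mem_range, Set.union_singleton, Set.mem_insert_iff, Fin.exists_fin_succ]
    rw [eq_comm]
    rfl
  have hm : (∃ x, M *ᵥ x = c) ↔ c ∈ Submodule.span F (Set.range M.col) := by
    rw [← Matrix.range_mulVecLin]; rfl
  rw [rank_eq_finrank_span_cols, hr, rank_eq_finrank_span_cols]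
  split_ifs with h
  · have : Submodule.span F {c} ≤ Submodule.span F (Set.range M.col) := by
      rw [Submodule.span_singleton_le_iff_mem]; exact hm.1 h
    rw [sup_eq_left.2 this, add_zero]
  · exact Submodule.finrank_sup_span_singleton (fun h' => h (hm.2 h'))

lemma alt_mulVec_dot {n : ℕ} (A : Alt F n) (x y : Fin n → F) :
    (A.1 *ᵥ x) ⬝ᵥ y = - (x ⬝ᵥ (A.1 *ᵥ y)) := by
  rw [dotProduct_comm, dotProduct_mulVec, ← mulVec_transpose, A.2.1, neg_mulVec, neg_dotProduct,
    dotProduct_comm]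

lemma alt_dot_self {n : ℕ} (A : Alt F n) (x : Fin n → F) :
    x ⬝ᵥ (A.1 *ᵥ x) = 0 := by
  induction n with
  | zero => simp
  | succ n ih =>
    obtain ⟨⟨v, B⟩, rfl⟩ := (brdEquiv F n).surjective A
    have := ih B (fun i => x i.succ)
    have e0 : ((brdEquiv F n (v, B)).1 *ᵥ x) = Fin.cons (v ⬝ᵥ (fun i => x i.succ))
        ((B.1 *ᵥ fun i => x i.succ) - x 0 • v) := by
      ext i
      refine Fin.cases ?_ (fun i => ?_) i
      · simp [brdEquiv_coe, mulVec, dotProduct, Fin.sum_univ_succ]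
      · simp [brdEquiv_coe, mulVec, dotProduct, Fin.sum_univ_succ]; ring
    have e1 : x ⬝ᵥ ((brdEquiv F n (v, B)).1 *ᵥ x) = x 0 * (v ⬝ᵥ (fun i => x i.succ)) +
        (fun i => x i.succ) ⬝ᵥ ((B.1 *ᵥ fun i => x i.succ) - x 0 • v) := by
      rw [e0]
      conv_lhs => rw [dotProduct, Fin.sum_univ_succ]
      rfl
    rw [e1, dotProduct_sub, this, dotProduct_smul, dotProduct_comm v, smul_eq_mul]
    ring

lemma rank_brd {n : ℕ} (v : Fin n → F) (A : Alt F n) [Decidable (∃ x, A.1 *ᵥ x = v)] :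
    (brd v A.1).rank = A.1.rank + if (∃ x, A.1 *ᵥ x = v) then 0 else 2 := by
  classical
  have e1 : brd v A.1 = addCol (Fin.cons 0 (-v)) (addCol v (A.1ᵀ))ᵀ := by
    ext i j
    refine Fin.cases ?_ (fun i => ?_) i <;> refine Fin.cases ?_ (fun j => ?_) j <;> rfl
  have hmv : ∀ x, (addCol v (A.1ᵀ))ᵀ *ᵥ x = Fin.cons (v ⬝ᵥ x) (A.1 *ᵥ x) := by
    intro x; ext i
    refine Fin.cases ?_ (fun i => ?_) i <;> rfl
  have h1 : (∃ x, A.1ᵀ *ᵥ x = v) ↔ (∃ x, A.1 *ᵥ x = v) := by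
    rw [A.2.1]
    constructor
    · rintro ⟨x, rfl⟩; exact ⟨-x, by simp [mulVec_neg, neg_mulVec]⟩
    · rintro ⟨x, rfl⟩; exact ⟨-x, by simp [mulVec_neg, neg_mulVec]⟩
  have h2 : (∃ x, (addCol v (A.1ᵀ))ᵀ *ᵥ x = Fin.cons 0 (-v)) ↔ (∃ x, A.1 *ᵥ x = v) := by
    constructor
    · rintro ⟨x, hx⟩
      rw [hmv] at hx
      have := (Fin.cons_inj.1 hx).2
      exact ⟨-x, by simp [mulVec_neg, this]⟩
    · rintro ⟨x, rfl⟩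
      refine ⟨-x, ?_⟩
      rw [hmv]
      have : (A.1 *ᵥ x) ⬝ᵥ (-x) = 0 := by
        rw [dotProduct_neg, dotProduct_comm, alt_dot_self, neg_zero]
      rw [this, mulVec_neg]
  rw [e1, rank_addCol, rank_transpose, rank_addCol, rank_transpose]
  simp only [h1, h2]
  split_ifs <;> rfl

lemma rank_even {n : ℕ} (A : Alt F n) : Even A.1.rank := by
  classical
  induction n with
  | zero =>
    have h := A.1.rank_le_card_width
    simp only [Fintype.card_fin, Nat.le_zero] at h
    rw [h]; exact Even.zero
  | succ n ih =>
    obtain ⟨⟨v, B⟩, rfl⟩ := (brdEquiv F n).surjective A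
    rw [brdEquiv_coe, rank_brd]
    have := ih B
    split_ifs
    · exact this
    · exact this.add even_two

/-- Congruence. -/
def congEquiv {n : ℕ} (P Q : Matrix (Fin n) (Fin n) F) (h : P * Q = 1) :
    Alt F n ≃+ Alt F n where
  toFun A := ⟨Pᵀ * A.1 * P, by
    constructor
    · simp [transpose_mul, A.2.1, Matrix.mul_assoc]
    · intro i
      have := alt_dot_self A (fun k => P k i)
      rw [← this, Matrix.mul_assoc]
      rfl⟩
  invFun A := ⟨Qᵀ * A.1 * Q, by
    constructor
    · simp [transpose_mul, A.2.1, Matrix.mul_assoc]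
    · intro i
      have := alt_dot_self A (fun k => Q k i)
      rw [← this, Matrix.mul_assoc]
      rfl⟩
  left_inv A := by
    apply Subtype.ext
    have h' : Qᵀ * Pᵀ = 1 := by rw [← transpose_mul, h, transpose_one]
    show Qᵀ * (Pᵀ * A.1 * P) * Q = A.1
    rw [← Matrix.mul_assoc, ← Matrix.mul_assoc, h', Matrix.one_mul, Matrix.mul_assoc, h, Matrix.mul_one]
  right_inv A := by
    apply Subtype.ext
    have h1 : Q * P = 1 := mul_eq_one_comm.1 h
    have h' : Pᵀ * Qᵀ = 1 := by rw [← transpose_mul, h1, transpose_one]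
    show Pᵀ * (Qᵀ * A.1 * Q) * P = A.1
    rw [← Matrix.mul_assoc, ← Matrix.mul_assoc, h', Matrix.one_mul, Matrix.mul_assoc, h1, Matrix.mul_one]
  map_add' A B := by
    apply Subtype.ext
    show Pᵀ * (A.1 + B.1) * P = Pᵀ * A.1 * P + Pᵀ * B.1 * P
    rw [Matrix.mul_add, Matrix.add_mul]

lemma congEquiv_coe {n : ℕ} (P Q : Matrix (Fin n) (Fin n) F) (h : P * Q = 1) (A : Alt F n) :
    (congEquiv P Q h A).1 = Pᵀ * A.1 * P := rfl

lemma rank_cong {n : ℕ} (P Q : Matrix (Fin n) (Fin n) F) (h : P * Q = 1) (A : Alt F n) :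
    (congEquiv P Q h A).1.rank = A.1.rank := by
  have hP : IsUnit P.det := by
    rw [← Matrix.isUnit_iff_isUnit_det]
    exact ⟨⟨P, Q, h, mul_eq_one_comm.1 h⟩, rfl⟩
  rw [congEquiv_coe, rank_mul_eq_left_of_isUnit_det _ _ hP, rank_mul_eq_right_of_isUnit_det]
  rwa [det_transpose]

lemma exists_P {n : ℕ} (w : Fin (n+1) → F) (hw : w ≠ 0) :
    ∃ P Q : Matrix (Fin (n+1)) (Fin (n+1)) F, P * Q = 1 ∧ P *ᵥ w = Pi.single 0 1 := by
  have he : (Pi.single 0 1 : Fin (n+1) → F) ≠ 0 := by simp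
  let f := (LinearEquiv.toSpanNonzeroSingleton F _ w hw).symm ≪≫ₗ
    (LinearEquiv.toSpanNonzeroSingleton F _ (Pi.single 0 1 : Fin (n+1) → F) he)
  obtain ⟨e, h⟩ := Submodule.exists_linearEquiv_restrict_eq f
  have hew : e w = Pi.single 0 1 := by
    have := h ⟨w, Submodule.mem_span_singleton_self w⟩
    rw [← this]
    have e2 : (⟨w, Submodule.mem_span_singleton_self w⟩ : Submodule.span F {w}) =
      LinearEquiv.toSpanNonzeroSingleton F _ w hw 1 := by
      rw [LinearEquiv.toSpanNonzeroSingleton_one]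
    have e3 := congrArg (fun z => (f z : Fin (n+1) → F)) e2
    refine e3.trans ?_
    rw [LinearEquiv.trans_apply, LinearEquiv.symm_apply_apply,
      LinearEquiv.toSpanNonzeroSingleton_one]
  refine ⟨LinearMap.toMatrix' e.toLinearMap, LinearMap.toMatrix' e.symm.toLinearMap, ?_, ?_⟩
  · rw [← LinearMap.toMatrix'_comp]; simp
  · rw [LinearMap.toMatrix'_mulVec]; exact hew
end rank

section four
variable {F : Type*} [Field F] [Fintype F]

noncomputable instance (n : ℕ) : Fintype (Alt F n) := by
  classical
  exact Fintype.ofFinite _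

lemma card_alt (n : ℕ) : Fintype.card (Alt F (n+1)) = Fintype.card F ^ n * Fintype.card (Alt F n) := by
  rw [← Fintype.card_congr (brdEquiv F n).toEquiv, Fintype.card_prod]
  simp

/-- The character attached to a vector. -/
noncomputable def dchar {n : ℕ} (w : Fin n → F) : AddChar (Fin n → F) ℂ :=
  (AddChar.FiniteField.primitiveChar_to_Complex F).compAddMonoidHom
    (AddMonoidHom.mk' (fun v => w ⬝ᵥ v) (fun a b => dotProduct_add w a b))

lemma dchar_apply {n : ℕ} (w v : Fin n → F) :
    dchar w v = AddChar.FiniteField.primitiveChar_to_Complex F (w ⬝ᵥ v) := rfl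

lemma prim_aux (a : F) (h : ∀ s, AddChar.FiniteField.primitiveChar_to_Complex F (a * s) = 1) : a = 0 := by
  by_contra ha
  apply AddChar.FiniteField.primitiveChar_to_Complex_isPrimitive F ha
  ext s
  rw [AddChar.mulShift_apply, h s]; rfl

lemma dchar_eq_one {n : ℕ} (w : Fin n → F) (h : ∀ v, dchar w v = 1) : w = 0 := by
  classical
  ext i
  apply prim_aux
  intro s
  have := h (Pi.single i s)
  rwa [dchar_apply, dotProduct_single] at this

lemma exists_w {n : ℕ} (ψ : AddChar (Fin n → F) ℂ) : ∃ w, ψ = dchar w := by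
  classical
  have hinj : Function.Injective (dchar : (Fin n → F) → AddChar (Fin n → F) ℂ) := by
    intro a b hab
    rw [← sub_eq_zero]
    apply dchar_eq_one
    intro v
    have := DFunLike.congr_fun hab v
    rw [dchar_apply, dchar_apply] at this
    rw [dchar_apply, sub_dotProduct, AddChar.map_sub_eq_div, this, div_self]
    rw [← dchar_apply]
    exact (AddChar.val_isUnit _ _).ne_zero
  have hb := (Fintype.bijective_iff_injective_and_card _).2 ⟨hinj, AddChar.card_eq.symm⟩
  obtain ⟨w, hw⟩ := hb.2 ψ
  exact ⟨w, hw.symm⟩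

open Classical in
lemma sum_dchar {n : ℕ} (w : Fin n → F) :
    ∑ v, dchar w v = if w = 0 then (Fintype.card F : ℂ) ^ n else 0 := by
  rw [AddChar.sum_eq_ite]
  by_cases h : w = 0
  · have : dchar w = 0 := by
      subst h
      ext v; simp [dchar_apply]
    rw [if_pos h, if_pos this]; simp
  · have : dchar w ≠ 0 := fun h' => h (dchar_eq_one w (fun v => by rw [h']; rfl))
    rw [if_neg h, if_neg this]

open Classical in
lemma sum_range_dchar {n : ℕ} (w : Fin n → F) (A : Alt F n) :
    ∑ v, (if ∃ x, A.1 *ᵥ x = v then dchar w v else 0)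
      = if A.1 *ᵥ w = 0 then (Fintype.card F : ℂ) ^ A.1.rank else 0 := by
  let R := LinearMap.range A.1.mulVecLin
  let φ : AddChar R ℂ := (dchar w).compAddMonoidHom R.subtype.toAddMonoidHom
  have h1 : ∑ v, (if ∃ x, A.1 *ᵥ x = v then dchar w v else 0) = ∑ r : R, φ r := by
    rw [← Finset.sum_filter]
    exact Finset.sum_subtype (p := fun v => v ∈ R) (f := fun v => dchar w v) _
      (by intro x; simp [R])
  rw [h1, AddChar.sum_eq_ite]
  have hc : (Fintype.card R : ℂ) = (Fintype.card F : ℂ) ^ A.1.rank := by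
    rw [Module.card_eq_pow_finrank (K := F) (V := R)]
    push_cast
    rfl
  have hφ : φ = 0 ↔ A.1 *ᵥ w = 0 := by
    constructor
    · intro h
      apply dchar_eq_one
      intro v
      have := DFunLike.congr_fun h ⟨A.1 *ᵥ (-v), ⟨-v, rfl⟩⟩
      rw [dchar_apply, alt_mulVec_dot, ← dotProduct_neg, ← mulVec_neg]
      exact this
    · intro h
      ext ⟨_, ⟨v, rfl⟩⟩
      show dchar w (A.1 *ᵥ v) = 1
      have := alt_mulVec_dot A w v
      rw [h, zero_dotProduct, eq_comm, neg_eq_zero] at this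
      rw [dchar_apply, this, AddChar.map_zero_eq_one]
  simp only [hφ, hc]

/-- Fourier transform of a function of the rank. -/
noncomputable def H {n : ℕ} (g : ℕ → ℝ) (ψ : AddChar (Alt F n) ℂ) : ℂ :=
  ∑ A : Alt F n, (g A.1.rank : ℂ) * ψ A

open Classical in
lemma H_succ {n : ℕ} (g : ℕ → ℝ) (ψ : AddChar (Alt F (n+1)) ℂ) :
    ∃ (w : Fin n → F) (φ : AddChar (Alt F n) ℂ), (ψ = 1 → w = 0 ∧ φ = 1) ∧
    H g ψ = ∑ A : Alt F n, φ A * ((g (A.1.rank + 2) : ℂ) *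
      (if w = 0 then (Fintype.card F : ℂ) ^ n else 0)
      + ((g A.1.rank : ℂ) - g (A.1.rank + 2)) *
        (if A.1 *ᵥ w = 0 then (Fintype.card F : ℂ) ^ A.1.rank else 0)) := by
  obtain ⟨w, hw⟩ := exists_w (ψ.compAddMonoidHom
    ((brdEquiv F n).toAddMonoidHom.comp (AddMonoidHom.inl _ _)))
  refine ⟨w, ψ.compAddMonoidHom
    ((brdEquiv F n).toAddMonoidHom.comp (AddMonoidHom.inr _ _)), ?_, ?_⟩
  · rintro rfl
    refine ⟨dchar_eq_one w fun v => ?_, ?_⟩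
    · rw [← hw]; rfl
    · ext v; rfl
  · rw [H, ← (brdEquiv F n).toEquiv.sum_comp, Fintype.sum_prod_type_right]
    refine Finset.sum_congr rfl fun A _ => ?_
    have hψ : ∀ v, ψ (brdEquiv F n (v, A)) = dchar w v * ψ (brdEquiv F n (0, A)) := by
      intro v
      rw [← hw]
      show _ = ψ (brdEquiv F n (v, 0)) * _
      rw [← AddChar.map_add_eq_mul, ← map_add]
      simp
    rw [← sum_dchar, ← sum_range_dchar, Finset.mul_sum, Finset.mul_sum, ← Finset.sum_add_distrib,
      Finset.mul_sum]
    refine Finset.sum_congr rfl fun v _ => ?_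
    show (g (brdEquiv F n (v, A)).1.rank : ℂ) * ψ (brdEquiv F n (v, A)) =
      ψ (brdEquiv F n (0, A)) * _
    rw [hψ, brdEquiv_coe, rank_brd]
    split_ifs <;> simp <;> ring

lemma H_congr {n : ℕ} {g g' : ℕ → ℝ} (ψ : AddChar (Alt F n) ℂ) (h : ∀ r, g r = g' r) :
    H g ψ = H g' ψ := by
  rw [funext h]

lemma H_ker {k : ℕ} (h : ℕ → ℝ) (φ : AddChar (Alt F (k+1)) ℂ) (w : Fin (k+1) → F) (hw : w ≠ 0)
    [∀ A : Alt F (k+1), Decidable (A.1 *ᵥ w = 0)] :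
    ∃ φ' : AddChar (Alt F k) ℂ,
    ∑ A : Alt F (k+1), φ A * (if A.1 *ᵥ w = 0 then (h A.1.rank : ℂ) else 0) = H h φ' := by
  classical
  obtain ⟨P, Q, hPQ, hPw⟩ := exists_P w hw
  refine ⟨φ.compAddMonoidHom ((congEquiv P Q hPQ).toAddMonoidHom.comp
    ((brdEquiv F k).toAddMonoidHom.comp (AddMonoidHom.inr _ _))), ?_⟩
  have hP' : Qᵀ * Pᵀ = 1 := by rw [← transpose_mul, hPQ, transpose_one]
  rw [H, ← (congEquiv P Q hPQ).toEquiv.sum_comp, ← (brdEquiv F k).toEquiv.sum_comp,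
    Fintype.sum_prod_type_right]
  refine Finset.sum_congr rfl fun A _ => ?_
  rw [Finset.sum_eq_single 0]
  · show φ (congEquiv P Q hPQ (brdEquiv F k (0, A))) *
      (if (congEquiv P Q hPQ (brdEquiv F k (0, A))).1 *ᵥ w = 0 then
       (h (congEquiv P Q hPQ (brdEquiv F k (0, A))).1.rank : ℂ) else 0) = 
       _ * φ (congEquiv P Q hPQ (brdEquiv F k (0, A)))
    have h5 : ∃ x, A.1 *ᵥ x = 0 := ⟨0, by simp⟩
    rw [rank_cong, brdEquiv_coe, rank_brd, if_pos h5, if_pos, add_zero, mul_comm]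
    rw [congEquiv_coe, ← mulVec_mulVec, hPw, ← mulVec_mulVec, brdEquiv_coe]
    have : brd 0 A.1 *ᵥ Pi.single 0 1 = 0 := by
      ext i
      refine Fin.cases ?_ (fun i => ?_) i <;> simp
    rw [this, mulVec_zero]
  · intro v _ hv
    show _ * (if (congEquiv P Q hPQ (brdEquiv F k (v, A))).1 *ᵥ w = 0 then _ else _) = _
    rw [if_neg, mul_zero]
    intro h0
    rw [congEquiv_coe, ← mulVec_mulVec, hPw, ← mulVec_mulVec, brdEquiv_coe] at h0
    have h1 : brd v A.1 *ᵥ Pi.single 0 1 = 0 := by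
      rw [← one_mulVec (brd v A.1 *ᵥ Pi.single 0 1), ← hP', ← mulVec_mulVec, h0, mulVec_zero]
    apply hv
    ext i
    have := congrFun h1 i.succ
    simpa using this
  · simp

lemma H_cases {n : ℕ} (g : ℕ → ℝ) (ψ : AddChar (Alt F (n+1)) ℂ) :
    (∃ φ : AddChar (Alt F n) ℂ, (ψ = 1 → φ = 1) ∧ H g ψ =
      H (fun r => (Fintype.card F : ℝ) ^ n * g (r+2)
        + (g r - g (r+2)) * (Fintype.card F : ℝ) ^ r) φ) ∨
    (ψ ≠ 1 ∧ ∃ k, ∃ _ : n = k + 1, ∃ φ : AddChar (Alt F k) ℂ, H g ψ =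
      H (fun r => (g r - g (r+2)) * (Fintype.card F : ℝ) ^ r) φ) := by
  classical
  obtain ⟨w, φ, h1, h2⟩ := H_succ g ψ
  by_cases hw : w = 0
  · left
    refine ⟨φ, fun h => (h1 h).2, ?_⟩
    rw [h2, H]
    refine Finset.sum_congr rfl fun A _ => ?_
    simp [hw]
    ring
  · right
    refine ⟨fun h => hw (h1 h).1, ?_⟩
    rcases n with _ | k
    · exact absurd (Subsingleton.elim _ _) hw
    refine ⟨k, rfl, ?_⟩
    obtain ⟨φ', h3⟩ := H_ker (fun r => (g r - g (r+2)) * (Fintype.card F : ℝ) ^ r) φ w hw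
    refine ⟨φ', ?_⟩
    rw [← h3, h2]
    refine Finset.sum_congr rfl fun A _ => ?_
    simp [hw]

/-- The annihilator polynomial. -/
noncomputable def FF (b : ℝ) (K : ℕ) (x : ℝ) : ℝ := ∏ j ∈ Finset.range K, (x - b ^ j)

lemma FF_zero (b x : ℝ) : FF b 0 x = 1 := by simp [FF]

lemma FF_succ (b : ℝ) (K : ℕ) (x : ℝ) : FF b (K+1) x = FF b K x * (x - b ^ K) := by
  simp [FF, Finset.prod_range_succ]

lemma FF_scale (b : ℝ) (K : ℕ) (x : ℝ) :
    FF b (K+1) (b * x) = b ^ K * (b * x - 1) * FF b K x := by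
  induction K with
  | zero => simp [FF]
  | succ K ih => rw [FF_succ, ih, FF_succ b K]; ring

lemma FF_diff (b : ℝ) (K : ℕ) (x : ℝ) :
    FF b (K+1) (b * x) - FF b (K+1) x = (b ^ (K+1) - 1) * x * FF b K x := by
  rw [FF_scale, FF_succ]; ring

/-- The extremal function of the rank. -/
noncomputable def gg (q : ℝ) (n K r : ℕ) : ℝ := FF (q ^ 2) K (q ^ (2 * (n / 2)) / q ^ r)

lemma gg_zero (q : ℝ) (n r : ℕ) : gg q n 0 r = 1 := FF_zero _ _

lemma gg_right (q : ℝ) (hq : 0 < q) (k K r : ℕ) :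
    (gg q (k+2) (K+1) r - gg q (k+2) (K+1) (r+2)) * q ^ r
      = ((q^2) ^ (K+1) - 1) * q ^ (2 * (k / 2)) * gg q k K r := by
  have hk : (k + 2) / 2 = k / 2 + 1 := by omega
  unfold gg
  rw [hk]
  generalize k / 2 = m
  have e1 : q ^ (2 * (m + 1)) / q ^ r = q ^ 2 * (q ^ (2 * m) / q ^ r) := by
    field_simp; ring
  have e2 : q ^ (2 * (m + 1)) / q ^ (r + 2) = q ^ (2 * m) / q ^ r := by
    field_simp; ring
  rw [e1, e2, FF_diff]
  field_simp

lemma gg_even (q : ℝ) (hq : 0 < q) (m K r : ℕ) :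
    q ^ (2*m+1) * gg q (2*m+2) (K+1) (r+2) +
      (gg q (2*m+2) (K+1) r - gg q (2*m+2) (K+1) (r+2)) * q ^ r
      = q ^ (2*m+1) * gg q (2*m+1) (K+1) r
        + ((q^2) ^ (K+1) - 1) * q ^ (2 * m) * gg q (2*m+1) K r := by
  have h1 : (2*m+2)/2 = m + 1 := by omega
  have h2 : (2*m+1)/2 = m := by omega
  unfold gg
  rw [h1, h2]
  have e1 : q ^ (2 * (m + 1)) / q ^ r = q ^ 2 * (q ^ (2 * m) / q ^ r) := by
    field_simp; ring
  have e2 : q ^ (2 * (m + 1)) / q ^ (r + 2) = q ^ (2 * m) / q ^ r := by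
    field_simp; ring
  rw [e1, e2, FF_diff]
  field_simp

lemma gg_odd (q : ℝ) (hq : 0 < q) (m K r : ℕ) :
    q ^ (2*m) * gg q (2*m+1) (K+1) (r+2) +
      (gg q (2*m+1) (K+1) r - gg q (2*m+1) (K+1) (r+2)) * q ^ r
      = q ^ (2*m) / (q ^ 2) ^ (K+1) * gg q (2*m) (K+1) r := by
  have h1 : (2*m)/2 = m := by omega
  have h2 : (2*m+1)/2 = m := by omega
  unfold gg
  rw [h1, h2]
  obtain ⟨y, hy⟩ : ∃ y, y = q ^ (2*m) / q ^ (r+2) := ⟨_, rfl⟩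
  have e1 : q ^ (2 * m) / q ^ r = q ^ 2 * y := by
    rw [hy]; field_simp; ring
  have e3 : q ^ (2 * m) = q ^ 2 * y * q ^ r := by
    rw [← e1]; field_simp
  rw [e1, ← hy, FF_diff, FF_scale, FF_succ, e3]
  field_simp
  ring

lemma H_smul {n : ℕ} (a : ℝ) (g : ℕ → ℝ) (ψ : AddChar (Alt F n) ℂ) :
    H (fun r => a * g r) ψ = a * H g ψ := by
  rw [H, H, Finset.mul_sum]
  refine Finset.sum_congr rfl fun A _ => ?_
  push_cast; ring

lemma H_add {n : ℕ} (g g' : ℕ → ℝ) (ψ : AddChar (Alt F n) ℂ) :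
    H (fun r => g r + g' r) ψ = H g ψ + H g' ψ := by
  rw [H, H, H, ← Finset.sum_add_distrib]
  refine Finset.sum_congr rfl fun A _ => ?_
  push_cast; ring

open Classical in
lemma H_one {n : ℕ} (ψ : AddChar (Alt F n) ℂ) :
    H (fun _ => 1) ψ = if ψ = 0 then (Fintype.card (Alt F n) : ℂ) else 0 := by
  rw [← AddChar.sum_eq_ite, H]
  simp

lemma H_base (g : ℕ → ℝ) (ψ : AddChar (Alt F 0) ℂ) : H g ψ = g 0 := by
  have : Unique (Alt F 0) := ⟨⟨0⟩, fun A => Subtype.ext (Subsingleton.elim _ _)⟩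
  rw [H, Fintype.sum_unique]
  have h : (default : Alt F 0) = 0 := Subsingleton.elim _ _
  rw [h, AddChar.map_zero_eq_one]
  simp

open scoped ComplexOrder in
lemma H_nonneg (q : ℝ) (hq : q = Fintype.card F) (n : ℕ) :
    ∀ (K : ℕ) (ψ : AddChar (Alt F n) ℂ), 0 ≤ H (gg q n K) ψ := by
  classical
  have hq1 : 1 ≤ q := by rw [hq]; exact_mod_cast Fintype.card_pos
  have hq0 : 0 < q := by linarith
  induction n using Nat.strong_induction_on with
  | _ n ih =>
  intro K ψ
  rcases K with _ | K
  · rw [H_congr ψ (fun r => gg_zero q n r), H_one]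
    split_ifs
    · exact_mod_cast Nat.zero_le _
    · exact le_rfl
  have hb : 0 ≤ (q^2) ^ (K+1) - 1 := by
    have := one_le_pow₀ (n := K+1) (one_le_pow₀ (n := 2) hq1)
    linarith
  rcases n with _ | N
  · rw [H_base]
    have : gg q 0 (K+1) 0 = 0 := by
      simp [gg, FF, Finset.prod_range_succ']
    rw [this]; simp
  rcases H_cases (gg q (N+1) (K+1)) ψ with ⟨φ, _, h⟩ | ⟨_, k, rfl, φ, h⟩
  · rw [h, ← hq]
    rcases Nat.even_or_odd' N with ⟨m, rfl | rfl⟩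
    · rw [H_congr φ (fun r => gg_odd q hq0 m K r), H_smul]
      exact mul_nonneg (by exact_mod_cast (by positivity)) (ih _ (by omega) _ _)
    · rw [H_congr φ (fun r => gg_even q hq0 m K r), H_add, H_smul, H_smul]
      refine add_nonneg (mul_nonneg (by exact_mod_cast (by positivity)) (ih _ (by omega) _ _))
        (mul_nonneg ?_ (ih _ (by omega) _ _))
      have : 0 ≤ ((q^2) ^ (K+1) - 1) * q ^ (2 * m) := by positivity
      exact_mod_cast this
  · rw [h, ← hq, H_congr φ (fun r => gg_right q hq0 k K r), H_smul]
    refine mul_nonneg ?_ (ih _ (by omega) _ _)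
    have : 0 ≤ ((q^2) ^ (K+1) - 1) * q ^ (2 * (k / 2)) := by positivity
    exact_mod_cast this

lemma H_triv (q : ℝ) (hq : q = Fintype.card F) (n : ℕ) :
    ∀ (K : ℕ), H (gg q n K) (1 : AddChar (Alt F n) ℂ) =
      ((Fintype.card (Alt F n) * FF (q^2) K (q ^ (2*(n/2))) /
        (q ^ (2 * ((n+1)/2)) / q) ^ K : ℝ) : ℂ) := by
  classical
  have hq1 : 1 ≤ q := by rw [hq]; exact_mod_cast Fintype.card_pos
  have hq0 : 0 < q := by linarith
  induction n with
  | zero =>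
    intro K
    rw [H_base]
    congr 1
    have hc : Fintype.card (Alt F 0) = 1 := by
      have : Unique (Alt F 0) := ⟨⟨0⟩, fun A => Subtype.ext (Subsingleton.elim _ _)⟩
      exact Fintype.card_unique
    rw [hc]
    rcases K with _ | K
    · simp [gg, FF]
    · simp [gg, FF, Finset.prod_range_succ']
  | succ N ih =>
    intro K
    rcases K with _ | K
    · rw [H_congr 1 (fun r => gg_zero q _ r), H_one, if_pos AddChar.one_eq_zero]
      simp [FF]
    rcases H_cases (gg q (N+1) (K+1)) (1 : AddChar (Alt F (N+1)) ℂ) with ⟨φ, hφ, h⟩ | ⟨h, _⟩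
    · rw [h, ← hq, hφ rfl, card_alt, Nat.cast_mul, Nat.cast_pow, ← hq]
      rcases Nat.even_or_odd' N with ⟨m, rfl | rfl⟩
      · rw [H_congr 1 (fun r => gg_odd q hq0 m K r), H_smul, ih]
        have h1 : (2*m)/2 = m := by omega
        have h2 : (2*m+1)/2 = m := by omega
        have h3 : (2*m+1+1)/2 = m+1 := by omega
        rw [h1, h2, h3]
        norm_cast
        field_simp
        ring
      · rw [H_congr 1 (fun r => gg_even q hq0 m K r), H_add, H_smul, H_smul, ih, ih]
        have h2 : (2*m+1)/2 = m := by omega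
        have h3 : (2*m+1+1)/2 = m+1 := by omega
        have h4 : (2*m+1+1+1)/2 = m+1 := by omega
        rw [h2, h3, h4]
        have e1 : q ^ (2 * (m + 1)) = q ^ 2 * (q ^ (2 * m)) := by ring
        have e2 : q ^ (2 * (m + 1)) / q = q ^ (2 * m + 1) := by field_simp; ring
        have e3 := FF_diff (q^2) K (q ^ (2*m))
        rw [← e1, sub_eq_iff_eq_add] at e3
        rw [e2, e3]
        norm_cast
        field_simp
        ring
    · exact absurd rfl h

lemma gg_vanish (q : ℝ) (hq : 1 ≤ q) (n d i : ℕ) (hd : d ≤ i) (hi : i ≤ n / 2) :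
    gg q n (n / 2 - d + 1) (2 * i) = 0 := by
  have hq0 : 0 < q := by linarith
  unfold gg FF
  apply Finset.prod_eq_zero (i := n / 2 - i)
  · simp; omega
  · rw [sub_eq_zero, div_eq_iff (by positivity), ← pow_mul, ← pow_add]
    congr 1
    omega

lemma gg_pos (q : ℝ) (hq : 1 < q) (m K : ℕ) (h : K ≤ m) : 0 < FF (q^2) K (q ^ (2 * m)) := by
  apply Finset.prod_pos
  intro j hj
  rw [Finset.mem_range] at hj
  rw [sub_pos, pow_mul]
  exact pow_lt_pow_right₀ (one_lt_pow₀ hq (by norm_num)) (by omega)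

lemma double_count {G : Type*} [AddCommGroup G] [Fintype G] [DecidableEq G] (f : G → ℂ)
    (C : Finset G) :
    ∑ ψ : AddChar G ℂ, (∑ A, f A * ψ A) * ((∑ X ∈ C, ψ X) * (starRingEnd ℂ) (∑ X ∈ C, ψ X))
      = Fintype.card G * ∑ X ∈ C, ∑ Y ∈ C, f (Y - X) := by
  have h1 : ∀ ψ : AddChar G ℂ,
      (∑ A, f A * ψ A) * ((∑ X ∈ C, ψ X) * (starRingEnd ℂ) (∑ X ∈ C, ψ X))
      = ∑ X ∈ C, ∑ Y ∈ C, ∑ A, f A * ψ (A - (Y - X)) := by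
    intro ψ
    rw [map_sum, Finset.sum_mul_sum, Finset.mul_sum]
    refine Finset.sum_congr rfl fun X _ => ?_
    rw [Finset.mul_sum]
    refine Finset.sum_congr rfl fun Y _ => ?_
    rw [Finset.sum_mul]
    refine Finset.sum_congr rfl fun A _ => ?_
    have : A - (Y - X) = A + (X + -Y) := by abel
    rw [this, AddChar.map_add_eq_mul, AddChar.map_add_eq_mul, AddChar.map_neg_eq_conj]
    ring
  simp_rw [h1]
  rw [Finset.sum_comm, Finset.mul_sum]
  refine Finset.sum_congr rfl fun X _ => ?_
  rw [Finset.sum_comm, Finset.mul_sum]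
  refine Finset.sum_congr rfl fun Y _ => ?_
  rw [Finset.sum_comm]
  simp_rw [← Finset.mul_sum, AddChar.sum_apply_eq_ite, sub_eq_zero]
  simp [mul_comm]

open scoped ComplexOrder in
lemma main_bound (n d : ℕ) (hd : 1 ≤ d) (hdn : d ≤ n / 2) (C : Finset (Alt F n))
    (hC : ∀ X ∈ C, ∀ Y ∈ C, X ≠ Y → 2 * d ≤ (X.1 - Y.1).rank) :
    C.card ≤ Fintype.card F ^ ((n * (n - 1) / (2 * (n / 2))) * (n / 2 - d + 1)) := by
  classical
  obtain ⟨q, hq⟩ : ∃ q : ℝ, q = Fintype.card F := ⟨_, rfl⟩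
  have hq1 : 1 < q := by rw [hq]; exact_mod_cast Fintype.one_lt_card
  have hq0 : 0 < q := by linarith
  obtain ⟨K, hK⟩ : ∃ K, K = n / 2 - d + 1 := ⟨_, rfl⟩
  rcases Finset.eq_empty_or_nonempty C with rfl | hne
  · simp
  have hCpos : (0 : ℝ) < C.card := by exact_mod_cast hne.card_pos
  have h1 := double_count (fun A : Alt F n => (gg q n K A.1.rank : ℂ)) C
  have h2 : ∑ X ∈ C, ∑ Y ∈ C, (gg q n K (Y - X).1.rank : ℂ) = C.card * (gg q n K 0 : ℂ) := by
    rw [← nsmul_eq_mul, ← Finset.sum_const]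
    refine Finset.sum_congr rfl fun X hX => ?_
    rw [Finset.sum_eq_single X]
    · simp
    · intro Y hY hne
      obtain ⟨i, hi⟩ := rank_even (Y - X)
      have h3 : 2 * d ≤ (Y - X).1.rank := hC Y hY X hX hne
      have h4 := (Y - X).1.rank_le_card_width
      rw [Fintype.card_fin] at h4
      have h5 : (Y - X).1.rank = 2 * i := by omega
      rw [h5, hK, gg_vanish q hq1.le n d i (by omega) (by omega)]
      simp
    · intro h; exact absurd hX h
  rw [h2] at h1
  have h3 : H (gg q n K) (1 : AddChar (Alt F n) ℂ) * ((C.card : ℂ) * C.card) ≤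
      Fintype.card (Alt F n) * (C.card * (gg q n K 0 : ℂ)) := by
    rw [← h1]
    have h4 := Finset.single_le_sum (f := fun ψ : AddChar (Alt F n) ℂ =>
      (∑ A : Alt F n, (gg q n K A.1.rank : ℂ) * ψ A) *
      ((∑ X ∈ C, ψ X) * (starRingEnd ℂ) (∑ X ∈ C, ψ X))) (s := Finset.univ)
      (fun ψ _ => mul_nonneg (H_nonneg q hq n K ψ) (by
        rw [Complex.mul_conj]; exact_mod_cast Complex.normSq_nonneg _)) (Finset.mem_univ 1)
    refine le_trans (le_of_eq ?_) h4
    simp [H]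
  rw [H_triv q hq] at h3
  have h4 : gg q n K 0 = FF (q^2) K (q ^ (2 * (n/2))) := by simp [gg]
  rw [h4] at h3
  have hp := gg_pos q hq1 (n/2) K (by omega)
  have h5 : (Fintype.card (Alt F n) * FF (q^2) K (q ^ (2*(n/2))) /
        (q ^ (2 * ((n+1)/2)) / q) ^ K : ℝ) * ((C.card : ℝ) * C.card) ≤
        Fintype.card (Alt F n) * (C.card * FF (q^2) K (q ^ (2 * (n/2)))) := by
    exact_mod_cast h3
  have hA : (0 : ℝ) < Fintype.card (Alt F n) := by exact_mod_cast Fintype.card_pos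
  have hc : (0 : ℝ) < (q ^ (2 * ((n+1)/2)) / q) ^ K := by positivity
  have h6 : (C.card : ℝ) ≤ (q ^ (2 * ((n+1)/2)) / q) ^ K := by
    rw [div_mul_eq_mul_div, div_le_iff₀ hc] at h5
    have hx : 0 < Fintype.card (Alt F n) * FF (q^2) K (q ^ (2 * (n/2))) * C.card := by positivity
    refine le_of_mul_le_mul_left ?_ hx
    linarith
  have h7 : q ^ (2 * ((n+1)/2)) / q = q ^ (n * (n - 1) / (2 * (n / 2))) := by
    rw [div_eq_iff hq0.ne', ← pow_succ]
    congr 1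
    rcases Nat.even_or_odd' n with ⟨m, rfl | rfl⟩
    · have e1 : 2 * m / 2 = m := by omega
      rw [e1, Nat.mul_div_cancel_left _ (by omega)]
      omega
    · have e1 : (2 * m + 1) / 2 = m := by omega
      rw [e1, Nat.add_sub_cancel, Nat.mul_div_cancel _ (by omega)]
      omega
  rw [h7, ← pow_mul, hK, hq] at h6
  exact_mod_cast h6

end four
end AltCode

/-- Singleton-like bound of Delsarte and Goethals for alternating rank-metric codes: if
`C ⊆ Alt_n(F_q)` is such that any two distinct codewords are at rank distance at least
`2d`, with `1 ≤ d ≤ ⌊n/2⌋`, then `|C| ≤ q^{(n(n−1)/(2⌊n/2⌋))·(⌊n/2⌋ − d + 1)}`. -/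
theorem singleton_like_bound
    {F : Type*} [Field F] [Fintype F] {n d : ℕ}
    (hd : 1 ≤ d) (hdn : d ≤ n / 2)
    (C : Set (Matrix (Fin n) (Fin n) F))
    (hCalt : ∀ X ∈ C, Xᵀ = -X ∧ ∀ i, X i i = 0)
    (hdist : ∀ X ∈ C, ∀ Y ∈ C, X ≠ Y → 2 * d ≤ (X - Y).rank) :
    Nat.card C ≤ Fintype.card F ^ ((n * (n - 1) / (2 * (n / 2))) * (n / 2 - d + 1)) := by
  classical
  let D : Finset (AltCode.Alt F n) := Finset.univ.filter (fun A => A.1 ∈ C)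
  have h := AltCode.main_bound n d hd hdn D (by
    intro X hX Y hY hne
    exact hdist _ (Finset.mem_filter.1 hX).2 _ (Finset.mem_filter.1 hY).2
      (fun h => hne (Subtype.ext h)))
  refine le_trans (le_of_eq ?_) h
  have e : C ≃ D :=
    { toFun := fun X => ⟨⟨X.1, hCalt X.1 X.2⟩, Finset.mem_filter.2 ⟨Finset.mem_univ _, X.2⟩⟩
      invFun := fun A => ⟨A.1.1, (Finset.mem_filter.1 A.2).2⟩
      left_inv := fun X => rfl
      right_inv := fun A => rfl }
  rw [Nat.card_congr e]
  simp
end
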